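/- Let d ≥ 2, let ν be a symmetric probability measure on ℝ^d whose support is contained in a ball of radius R, and let μ = γ_d ⋆ ν (which is then symmetric). Then for every smooth compactly supported function g : ℝ^d → ℝ, Var_μ(g) ≤ (d(d+3)/(d−1)) · e^{R²} · ∫_{ℝ^d} ‖∇g(x)‖² / (1 + e^{−R²}·‖x‖²) dμ(x). -/

import Mathlib

open MeasureTheory Real Set
open scoped ENNReal NNReal

noncomputable section

/-- `ℝ^d` as a Euclidean space. -/
abbrev Ed (d : ℕ) : Type := EuclideanSpace ℝ (Fin d)

/-- The standard Gaussian measure `γ_d` on `ℝ^d` (mean 0, identity covariance). -/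
def stdGaussian (d : ℕ) : Measure (Ed d) :=
  (volume : Measure (Ed d)).withDensity
    fun x => ENNReal.ofReal ((2 * π) ^ (-(d : ℝ) / 2) * Real.exp (-‖x‖ ^ 2 / 2))

/-- The centered Gaussian measure on `ℝ^d` with covariance `a·Id`. -/
def gaussianCov (d : ℕ) (a : ℝ) : Measure (Ed d) :=
  (volume : Measure (Ed d)).withDensity
    fun x => ENNReal.ofReal ((2 * π * a) ^ (-(d : ℝ) / 2) * Real.exp (-‖x‖ ^ 2 / (2 * a)))

/-- The Hessian quadratic form of `f` at `x`, evaluated at the direction `(w, w)`. -/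
def hessQF {d : ℕ} (f : Ed d → ℝ) (x w : Ed d) : ℝ :=
  fderiv ℝ (fun y => fderiv ℝ f y w) x w

/-- The (topological) support of a measure on `ℝ^d`. -/
def msupport {d : ℕ} (μ : Measure (Ed d)) : Set (Ed d) :=
  {x | ∀ U : Set (Ed d), IsOpen U → x ∈ U → μ U ≠ 0}

/-- The convolution `μ ⋆ ν` of two measures on `ℝ^d`: the law of `X + Y`
with `X ∼ μ`, `Y ∼ ν` independent. -/
def mconv {d : ℕ} (μ ν : Measure (Ed d)) : Measure (Ed d) :=
  Measure.map (fun p : Ed d × Ed d => p.1 + p.2) (μ.prod ν)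

/-- `μ` is `κ`-log-concave with density `p` w.r.t. Lebesgue measure: its support is
convex and `−∇² log p(x) ⪰ κ·Id` for `μ`-a.e. `x`. -/
def KLogConcaveD {d : ℕ} (κ : ℝ) (μ : Measure (Ed d)) (p : Ed d → ℝ) : Prop :=
  μ = (volume : Measure (Ed d)).withDensity (fun x => ENNReal.ofReal (p x)) ∧
    Convex ℝ (msupport μ) ∧
    ∀ᵐ x ∂μ, ∀ w : Ed d, hessQF (fun y => Real.log (p y)) x w ≤ -(κ * ‖w‖ ^ 2)

/-- `μ` is `κ`-log-concave. -/
def KLogConcave {d : ℕ} (κ : ℝ) (μ : Measure (Ed d)) : Prop :=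
  ∃ p : Ed d → ℝ, KLogConcaveD κ μ p

/-- `μ` is `β`-semi-log-convex with density `p` w.r.t. Lebesgue measure:
`−∇² log p(x) ⪯ β·Id` for every `x`. -/
def SemiLogConvexD {d : ℕ} (β : ℝ) (μ : Measure (Ed d)) (p : Ed d → ℝ) : Prop :=
  μ = (volume : Measure (Ed d)).withDensity (fun x => ENNReal.ofReal (p x)) ∧
    ∀ x w : Ed d, -(β * ‖w‖ ^ 2) ≤ hessQF (fun y => Real.log (p y)) x w

/-- `μ` is `β`-semi-log-convex. -/
def SemiLogConvex {d : ℕ} (β : ℝ) (μ : Measure (Ed d)) : Prop :=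
  ∃ p : Ed d → ℝ, SemiLogConvexD β μ p

/-- The Ornstein–Uhlenbeck semigroup:
`Q_t g(x) = ∫ g(e^{−t}x + √(1−e^{−2t})·y) dγ_d(y)`. -/
def OU {d : ℕ} (t : ℝ) (f : Ed d → ℝ) (x : Ed d) : ℝ :=
  ∫ y, f (Real.exp (-t) • x + Real.sqrt (1 - Real.exp (-2 * t)) • y) ∂(stdGaussian d)

/-- The heat semigroup: `P_t f(x) = ∫ f(x + √t·y) dγ_d(y)`. -/
def heatSG {d : ℕ} (t : ℝ) (f : Ed d → ℝ) (x : Ed d) : ℝ :=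
  ∫ y, f (x + Real.sqrt t • y) ∂(stdGaussian d)

/-- The entropy of `g` relative to `μ`:
`Ent_μ(g) = ∫ log(g)·g dμ − log(∫ g dμ)·∫ g dμ`. -/
def entRel {d : ℕ} (μ : Measure (Ed d)) (g : Ed d → ℝ) : ℝ :=
  ∫ x, Real.log (g x) * g x ∂μ - Real.log (∫ x, g x ∂μ) * ∫ x, g x ∂μ

/-- The variance of `g` under `μ`. -/
def varOf {d : ℕ} (μ : Measure (Ed d)) (g : Ed d → ℝ) : ℝ :=
  ∫ x, g x ^ 2 ∂μ - (∫ x, g x ∂μ) ^ 2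

/-- The distribution function of a density `p`: `F(λ) = Vol({x : p(x) ≥ λ})`. -/
def distFun {d : ℕ} (p : Ed d → ℝ) (l : ℝ) : ℝ≥0∞ :=
  (volume : Measure (Ed d)) {x | l ≤ p x}

/-- The density of the standard Gaussian measure w.r.t. Lebesgue measure. -/
def gaussPdf (d : ℕ) (x : Ed d) : ℝ :=
  (2 * π) ^ (-(d : ℝ) / 2) * Real.exp (-‖x‖ ^ 2 / 2)

/-- The `q`-Rényi entropy of a density `p`: `h_q = log(∫ p^q)/(1−q)`. -/
def renyi {d : ℕ} (p : Ed d → ℝ) (q : ℝ) : ℝ :=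
  Real.log (∫ x, p x ^ q ∂(volume : Measure (Ed d))) / (1 - q)

/-!
Write `γ` for the standard Gaussian measure. Rotating a pair of independent Gaussian points gives
`Var_γ(f) = ∫₀^{π/2} sin θ · E⟨∇f(U), ∇f(cos θ U + sin θ V)⟩ dθ`. For fixed `y`, we estimate the
correlation by AM-GM with weight `e^{h(cos θ U + sin θ V) - h(U)}`, where `h` is a quadratic
function depending on `θ` and centred at `-(1 + cos θ) y`. The average of the weight over `V` is
explicit, and its integral against `sin θ dθ` at `U = u` is at most `K / (1 + e^{-‖y‖²} ‖u + y‖²)`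
with `K = d (d + 3) / (d - 1)`: this is a weighted Poincaré inequality for `γ`.

For the mixture, bound `Var_μ(g)` by the second moment about `∫ g dγ` and condition on the centre
`y`. Passing from the variance of the translate `g(· + y)` to its second moment about `∫ g dγ` costs
the factor `e^{‖y‖²}`, by Cauchy-Schwarz against the Cameron-Martin density, and the resulting bound
is increasing in `‖y‖`.
-/

-- `D θ = ∫₀¹ exp (-θ(1 - r²)) dr` is itself a solution of `(1 + 2x) D + 2x D' = 1`.
lemma integral_exp_neg_mul_one_sub_sq_le_of_supersolution {R R' : ℝ → ℝ} {θ : ℝ}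
    (hR : ∀ x ∈ uIcc 0 θ, HasDerivAt R (R' x) x)
    (hsup : ∀ x ∈ uIcc 0 θ, 1 ≤ (1 + 2 * x) * R x + 2 * x * R' x) :
    ∫ r in (0 : ℝ)..1, exp (-(θ * (1 - r ^ 2))) ≤ R θ := by
  have hmem : ∀ r ∈ Icc (0 : ℝ) 1, θ * r ^ 2 ∈ uIcc 0 θ := fun r hr ↦ by
    have hr2 : r ^ 2 ≤ 1 := pow_le_one₀ hr.1 hr.2
    rcases le_total 0 θ with hθ | hθ
    · exact mem_uIcc.2 (.inl ⟨by positivity, mul_le_of_le_one_right hθ hr2⟩)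
    · exact mem_uIcc.2 (.inr ⟨by nlinarith, mul_nonpos_of_nonpos_of_nonneg hθ (sq_nonneg r)⟩)
  have hderiv : ∀ r ∈ Icc (0 : ℝ) 1,
      HasDerivAt (fun r ↦ r * R (θ * r ^ 2) * exp (-(θ * (1 - r ^ 2))))
        (((1 + 2 * (θ * r ^ 2)) * R (θ * r ^ 2) + 2 * (θ * r ^ 2) * R' (θ * r ^ 2))
          * exp (-(θ * (1 - r ^ 2)))) r := fun r hr ↦ by
    have hsq : HasDerivAt (fun r : ℝ ↦ θ * r ^ 2) (θ * (2 * r)) r := by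
      simpa using (hasDerivAt_pow 2 r).const_mul θ
    have hexp : HasDerivAt (fun r : ℝ ↦ exp (-(θ * (1 - r ^ 2))))
        (exp (-(θ * (1 - r ^ 2))) * (θ * (2 * r))) r := by
      refine ((hsq.sub_const θ).congr_of_eventuallyEq (.of_forall fun r ↦ ?_)).exp
      simp only; ring
    have := ((hasDerivAt_id r).mul ((hR _ (hmem r hr)).comp r hsq)).mul hexp
    refine this.congr_deriv ?_
    simp only [id_eq, Function.comp_apply, Pi.mul_apply]; ring
  have hle := intervalIntegral.integral_le_sub_of_hasDeriv_right_of_le zero_le_one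
    (fun r hr ↦ (hderiv r hr).continuousAt.continuousWithinAt)
    (fun r hr ↦ (hderiv r (Ioo_subset_Icc_self hr)).hasDerivWithinAt)
    (Continuous.integrableOn_Icc (f := fun r ↦ exp (-(θ * (1 - r ^ 2)))) (by fun_prop))
    fun r hr ↦ le_mul_of_one_le_left (exp_pos _).le (hsup _ (hmem r (Ioo_subset_Icc_self hr)))
  simpa using hle

lemma integral_exp_neg_mul_one_sub_sq_le {θ : ℝ} (hθ : -(3 / 2) < θ) :
    ∫ r in (0 : ℝ)..1, exp (-(θ * (1 - r ^ 2))) ≤ 3 / (3 + 2 * θ) := by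
  have hpos : ∀ x ∈ uIcc 0 θ, 0 < 3 + 2 * x := fun x hx ↦ by
    rcases mem_uIcc.1 hx with hx | hx <;> linarith [hx.1]
  refine integral_exp_neg_mul_one_sub_sq_le_of_supersolution (R := fun x ↦ 3 / (3 + 2 * x))
    (R' := fun x ↦ -6 / (3 + 2 * x) ^ 2) (fun x hx ↦ ?_) (fun x hx ↦ ?_)
  · have hlin : HasDerivAt (fun x : ℝ ↦ 3 + 2 * x) 2 x := by
      simpa using ((hasDerivAt_id x).const_mul 2).const_add 3
    refine ((hasDerivAt_const x 3).fun_div hlin (hpos x hx).ne').congr_deriv ?_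
    ring
  · have := hpos x hx
    have hexcess : (1 + 2 * x) * (3 / (3 + 2 * x)) + 2 * x * (-6 / (3 + 2 * x) ^ 2) - 1
        = 8 * x ^ 2 / (3 + 2 * x) ^ 2 := by field_simp; ring
    linarith [show 0 ≤ 8 * x ^ 2 / (3 + 2 * x) ^ 2 by positivity]

-- The bound agrees with the integral to second order at `0` and to leading order at infinity.
lemma integral_exp_neg_mul_one_sub_sq_le_of_nonneg {θ : ℝ} (hθ : 0 ≤ θ) :
    ∫ r in (0 : ℝ)..1, exp (-(θ * (1 - r ^ 2))) ≤ (15 + 2 * θ) / (15 + 12 * θ + 4 * θ ^ 2) := by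
  refine integral_exp_neg_mul_one_sub_sq_le_of_supersolution
    (R := fun x ↦ (15 + 2 * x) / (15 + 12 * x + 4 * x ^ 2))
    (R' := fun x ↦ (2 * (15 + 12 * x + 4 * x ^ 2) - (15 + 2 * x) * (12 + 8 * x))
      / (15 + 12 * x + 4 * x ^ 2) ^ 2) (fun x _ ↦ ?_) (fun x hx ↦ ?_)
  · have hnum : HasDerivAt (fun x : ℝ ↦ 15 + 2 * x) 2 x := by
      simpa using ((hasDerivAt_id x).const_mul 2).const_add 15
    have hden : HasDerivAt (fun x : ℝ ↦ 15 + 12 * x + 4 * x ^ 2) (12 + 8 * x) x := by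
      refine ((((hasDerivAt_id x).const_mul 12).const_add 15).add
        ((hasDerivAt_pow 2 x).const_mul 4)).congr_deriv ?_
      norm_num; ring
    exact hnum.fun_div hden (by nlinarith [sq_nonneg (x + 3 / 2)])
  · have : 0 ≤ x := (uIcc_of_le hθ ▸ hx).1
    have hexcess : (1 + 2 * x) * ((15 + 2 * x) / (15 + 12 * x + 4 * x ^ 2))
        + 2 * x * ((2 * (15 + 12 * x + 4 * x ^ 2) - (15 + 2 * x) * (12 + 8 * x))
          / (15 + 12 * x + 4 * x ^ 2) ^ 2) - 1
        = 64 * x ^ 3 / (15 + 12 * x + 4 * x ^ 2) ^ 2 := by field_simp; ring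
    linarith [show 0 ≤ 64 * x ^ 3 / (15 + 12 * x + 4 * x ^ 2) ^ 2 by positivity]

/-- The strength `α = 3 / (d + 3)` of the quadratic weight. Its value is a choice which makes the
final constant equal to `d (d + 3) / (d - 1)`. -/
def weightSlope (d : ℝ) : ℝ := 3 / (d + 3)

lemma weightSlope_pos {d : ℝ} (hd : 0 ≤ d) : 0 < weightSlope d := by
  unfold weightSlope; positivity

lemma weightSlope_le_one {d : ℝ} (hd : 0 ≤ d) : weightSlope d ≤ 1 :=
  div_le_one_of_le₀ (by linarith) (by linarith)

/-- The function of the correlation `ρ` which bounds the Gaussian average of the ratio of the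
quadratic weights at two `ρ`-correlated points; `A` stands for `e^{-‖y‖²} ‖u + y‖²`. -/
def weightProfile (d A ρ : ℝ) : ℝ :=
  exp (d / 2 * log (1 + weightSlope d * (1 - ρ ^ 2))
    + weightSlope d * (1 - ρ ^ 2) / 2 * (weightSlope d - (1 - weightSlope d) * A))

/-- The decay rate in `σ = 1 - ρ²` which `weightProfile d A` acquires once its logarithm is
replaced by the tangent line at `σ = 2 / 3`. -/
def profileRate (d A : ℝ) : ℝ :=
  3 / (2 * (d + 3)) * (d * A / (d + 3) - d * (d + 3) / (d + 5) - 3 / (d + 3))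

lemma log_le_half_sub_inv {x : ℝ} (hx : 1 ≤ x) : log x ≤ (x - x⁻¹) / 2 := by
  have h := self_le_sinh_iff.2 (log_nonneg hx)
  rwa [sinh_eq, exp_neg, exp_log (by linarith)] at h

lemma weightProfile_le {d A ρ : ℝ} (hd : 0 ≤ d) (hρ : ρ ^ 2 ≤ 1) :
    weightProfile d A ρ ≤ (d + 3) * (d + 5) / (d ^ 2 + 7 * d + 15)
      * exp (-(profileRate d A * (1 - ρ ^ 2))) := by
  set σ := 1 - ρ ^ 2
  have : 0 ≤ σ := sub_nonneg.2 hρ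
  have hα := weightSlope_pos hd
  have htangent : log (1 + weightSlope d * σ)
      ≤ log ((d + 5) / (d + 3)) + weightSlope d * (σ - 2 / 3) * ((d + 3) / (d + 5)) := by
    have h := log_le_sub_one_of_pos (x := (1 + weightSlope d * σ) / ((d + 5) / (d + 3)))
      (by positivity)
    rw [log_div (by positivity) (by positivity)] at h
    have : (1 + weightSlope d * σ) / ((d + 5) / (d + 3)) - 1
        = weightSlope d * (σ - 2 / 3) * ((d + 3) / (d + 5)) := by
      unfold weightSlope; field_simp; ring
    linarith
  have hlog := log_le_half_sub_inv (x := (d + 5) / (d + 3)) (by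
    rw [le_div_iff₀ (by positivity)]; linarith)
  have hexponent : d / 2 * log (1 + weightSlope d * σ)
      + weightSlope d * σ / 2 * (weightSlope d - (1 - weightSlope d) * A)
      ≤ d / ((d + 3) * (d + 5)) + -(profileRate d A * σ) := by
    have h := mul_le_mul_of_nonneg_left (htangent.trans (add_le_add_left hlog _))
      (show 0 ≤ d / 2 by positivity)
    refine (add_le_add_left h _).trans_eq ?_
    unfold profileRate weightSlope; field_simp; ring
  have hconst : exp (d / ((d + 3) * (d + 5))) ≤ (d + 3) * (d + 5) / (d ^ 2 + 7 * d + 15) := by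
    have h := add_one_le_exp (-(d / ((d + 3) * (d + 5))))
    rw [exp_neg, show -(d / ((d + 3) * (d + 5))) + 1
      = ((d + 3) * (d + 5) / (d ^ 2 + 7 * d + 15))⁻¹ by field_simp; ring] at h
    exact (inv_le_inv₀ (by positivity) (exp_pos _)).1 h
  calc weightProfile d A ρ
      ≤ exp (d / ((d + 3) * (d + 5))) * exp (-(profileRate d A * σ)) := by
        rw [← exp_add]; exact exp_le_exp.2 hexponent
    _ ≤ _ := by gcongr

lemma neg_three_halves_lt_profileRate {d A : ℝ} (hd : 0 ≤ d) (hA : 0 ≤ A) :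
    -(3 / 2) < profileRate d A := by
  have h : profileRate d A = 3 / (2 * (d + 3)) * (d * A / (d + 3))
      + 3 * (5 * d ^ 2 + 27 * d + 30) / (2 * (d + 5) * (d + 3) ^ 2) - 3 / 2 := by
    unfold profileRate; field_simp; ring
  rw [h]
  linarith [show 0 < 3 / (2 * (d + 3)) * (d * A / (d + 3))
    + 3 * (5 * d ^ 2 + 27 * d + 30) / (2 * (d + 5) * (d + 3) ^ 2) by positivity]

/-- The factor `1 + A`, up to a multiple depending only on `d`, as a function of the rate
`θ = profileRate d A`. -/
def profileNormalization (d θ : ℝ) : ℝ :=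
  3 * d ^ 4 + 18 * d ^ 3 + 30 * d ^ 2 - 6 * d - 45
    + 2 * (d ^ 4 + 10 * d ^ 3 + 28 * d ^ 2 + 6 * d - 45) * θ

lemma profileNormalization_profileRate {d A : ℝ} (hd : 0 < d) :
    profileNormalization d (profileRate d A) = 3 * d * (d + 5) * (d - 1) * (1 + A) := by
  unfold profileNormalization profileRate; field_simp; ring

lemma three_mul_profileNormalization_le {d θ : ℝ} (hd : 2 ≤ d) (hθ : θ ≤ 0) :
    3 * profileNormalization d θ ≤ 3 * d ^ 2 * (d ^ 2 + 7 * d + 15) * (3 + 2 * θ) := by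
  have hd0 : 0 < d := by linarith
  have hslope : 0 ≤ 18 * d ^ 3 + 78 * d ^ 2 + 36 * d - 270 := by nlinarith [pow_pos hd0 3]
  have hconst : 0 ≤ 9 * d ^ 3 + 45 * d ^ 2 + 18 * d + 135 := by positivity
  unfold profileNormalization
  linear_combination hconst + mul_nonneg hslope (neg_nonneg.2 hθ)

lemma profileNormalization_mul_le {d θ : ℝ} (hd : 2 ≤ d) :
    profileNormalization d θ * (15 + 2 * θ)
      ≤ 3 * d ^ 2 * (d ^ 2 + 7 * d + 15) * (15 + 12 * θ + 4 * θ ^ 2) := by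
  set a := 8 * d ^ 4 + 44 * d ^ 3 + 68 * d ^ 2 - 24 * d + 180 with ha
  set b := -84 * d ^ 3 - 360 * d ^ 2 - 168 * d + 1440 with hb
  set c := 15 * (3 * d ^ 3 + 15 * d ^ 2 + 6 * d + 45) with hc
  have hapos : 0 < a := by nlinarith [pow_pos (show 0 < d by linarith) 3]
  have hdisc : b ^ 2 ≤ 4 * a * c := by
    obtain ⟨e, he, rfl⟩ : ∃ e, 0 ≤ e ∧ d = e + 2 := ⟨d - 2, by linarith, by ring⟩
    have : 4 * a * c - b ^ 2 = 1440 * e ^ 7 + 28224 * e ^ 6 + 211968 * e ^ 5 + 765936 * e ^ 4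
        + 1633248 * e ^ 3 + 3913920 * e ^ 2 + 8866944 * e + 6462576 := by rw [ha, hb, hc]; ring
    exact sub_nonneg.1 (this ▸ by positivity)
  have hquad : 0 ≤ 4 * a * (a * θ ^ 2 + b * θ + c) := by nlinarith [sq_nonneg (2 * a * θ + b)]
  have := nonneg_of_mul_nonneg_right hquad (by positivity)
  unfold profileNormalization
  linear_combination this

lemma profileNormalization_mul_integral_le {d θ : ℝ} (hd : 2 ≤ d) (hθ : -(3 / 2) < θ)
    (hpos : 0 ≤ profileNormalization d θ) :
    profileNormalization d θ * ∫ r in (0 : ℝ)..1, exp (-(θ * (1 - r ^ 2)))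
      ≤ 3 * d ^ 2 * (d ^ 2 + 7 * d + 15) := by
  rcases le_total θ 0 with hθ0 | hθ0
  · refine (mul_le_mul_of_nonneg_left (integral_exp_neg_mul_one_sub_sq_le hθ) hpos).trans ?_
    rw [mul_div_assoc', div_le_iff₀ (by linarith), mul_comm]
    exact three_mul_profileNormalization_le hd hθ0
  · refine (mul_le_mul_of_nonneg_left
      (integral_exp_neg_mul_one_sub_sq_le_of_nonneg hθ0) hpos).trans ?_
    rw [mul_div_assoc', div_le_iff₀ (by positivity)]
    exact profileNormalization_mul_le hd

lemma one_add_weightSlope_mul_pos {d ρ : ℝ} (hd : 0 ≤ d) (hρ : ρ ^ 2 ≤ 1) :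
    0 < 1 + weightSlope d * (1 - ρ ^ 2) :=
  add_pos_of_pos_of_nonneg one_pos (mul_nonneg (weightSlope_pos hd).le (sub_nonneg.2 hρ))

lemma continuousAt_weightProfile {d A ρ : ℝ} (hd : 0 ≤ d) (hρ : ρ ^ 2 ≤ 1) :
    ContinuousAt (fun p : ℝ × ℝ ↦ weightProfile d p.1 p.2) (A, ρ) := by
  have : 1 + weightSlope d * (1 - ρ ^ 2) ≠ 0 := (one_add_weightSlope_mul_pos hd hρ).ne'
  unfold weightProfile
  fun_prop (disch := assumption)

lemma continuous_weightProfile_cos {d : ℝ} (hd : 0 ≤ d) :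
    Continuous fun p : ℝ × ℝ ↦ weightProfile d p.1 (cos p.2) :=
  continuous_iff_continuousAt.2 fun p ↦
    (continuousAt_weightProfile hd (cos_sq_le_one p.2)).comp (f := fun p : ℝ × ℝ ↦ (p.1, cos p.2))
      (by fun_prop)

lemma continuousOn_weightProfile {d : ℝ} (hd : 0 ≤ d) (A : ℝ) :
    ContinuousOn (weightProfile d A) (Icc (-1) 1) := fun ρ hρ ↦
  ((continuousAt_weightProfile hd ((sq_le_one_iff_abs_le_one ρ).2 (abs_le.2 hρ))).comp
    (f := fun r ↦ (A, r)) (by fun_prop)).continuousWithinAt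

lemma integral_weightProfile_le {d A : ℝ} (hd : 2 ≤ d) (hA : 0 ≤ A) :
    ∫ r in (0 : ℝ)..1, weightProfile d A r ≤ d * (d + 3) / (d - 1) / (1 + A) := by
  have hd0 : 0 ≤ d := by linarith
  have hd1 : 0 < d - 1 := by linarith
  have hsq : ∀ r ∈ Icc (0 : ℝ) 1, r ^ 2 ≤ 1 := fun r hr ↦ pow_le_one₀ hr.1 hr.2
  set θ := profileRate d A
  set I := ∫ r in (0 : ℝ)..1, exp (-(θ * (1 - r ^ 2)))
  have hprofile : ∫ r in (0 : ℝ)..1, weightProfile d A r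
      ≤ (d + 3) * (d + 5) / (d ^ 2 + 7 * d + 15) * I := by
    rw [← intervalIntegral.integral_const_mul]
    refine intervalIntegral.integral_mono_on zero_le_one
      ((continuousOn_weightProfile hd0 A).mono ?_).intervalIntegrable
      (Continuous.intervalIntegrable (by fun_prop) _ _)
      fun r hr ↦ weightProfile_le hd0 (hsq r hr)
    rw [uIcc_of_le zero_le_one]
    exact Icc_subset_Icc_left (by norm_num)
  have hnorm := profileNormalization_profileRate (A := A) (show 0 < d by linarith)
  have hbound := profileNormalization_mul_integral_le hd
    (neg_three_halves_lt_profileRate hd0 hA) (hnorm ▸ by positivity)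
  rw [hnorm] at hbound
  refine hprofile.trans ?_
  rw [div_div, le_div_iff₀ (by positivity), div_mul_eq_mul_div, div_mul_eq_mul_div,
    div_le_iff₀ (by positivity)]
  refine le_of_mul_le_mul_left ?_ (show 0 < 3 * d by linarith)
  linear_combination (d + 3) * hbound

lemma norm_weightProfile_le {d A ρ : ℝ} (hd : 0 ≤ d) (hA : 0 ≤ A) (hρ : ρ ^ 2 ≤ 1) :
    ‖weightProfile d A ρ‖ ≤ exp (d / 2 + 1) := by
  have hα := weightSlope_pos hd
  have hα1 := weightSlope_le_one hd
  have hM0 : 0 ≤ weightSlope d * (1 - ρ ^ 2) := mul_nonneg hα.le (sub_nonneg.2 hρ)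
  have hM1 : weightSlope d * (1 - ρ ^ 2) ≤ 1 :=
    mul_le_one₀ hα1 (sub_nonneg.2 hρ) (by linarith [sq_nonneg ρ])
  have hlog : log (1 + weightSlope d * (1 - ρ ^ 2)) ≤ 1 :=
    (log_le_sub_one_of_pos (by linarith)).trans (by linarith)
  have hlin : weightSlope d - (1 - weightSlope d) * A ≤ 1 := by
    linarith [mul_nonneg (sub_nonneg.2 hα1) hA]
  rw [weightProfile, norm_of_nonneg (exp_pos _).le]
  refine exp_le_exp.2 (add_le_add (mul_le_of_le_one_right (by positivity) hlog) ?_)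
  exact (mul_le_of_le_one_right (by positivity) hlin).trans (by linarith)

lemma integral_sin_mul_comp_cos {f : ℝ → ℝ} (hf : ContinuousOn f (Icc (-1) 1)) :
    ∫ θ in 0..π / 2, sin θ * f (cos θ) = ∫ ρ in 0..1, f ρ := by
  have hsubst := intervalIntegral.integral_comp_mul_deriv'' (a := 0) (b := π / 2) (f := cos)
    (f' := fun θ ↦ -sin θ) (g := f) (by fun_prop) (fun θ _ ↦ (hasDerivAt_cos θ).hasDerivWithinAt)
    (by fun_prop) (hf.mono (image_subset_iff.2 fun θ _ ↦ cos_mem_Icc θ))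
  rw [cos_zero, cos_pi_div_two, intervalIntegral.integral_symm 0 1] at hsubst
  rw [← neg_inj, ← hsubst, ← intervalIntegral.integral_neg]
  simp only [Function.comp_apply, mul_neg, mul_comm]

lemma integral_sin_mul_weightProfile_cos_nonneg (d A : ℝ) :
    0 ≤ ∫ θ in 0..π / 2, sin θ * weightProfile d A (cos θ) :=
  intervalIntegral.integral_nonneg (by positivity) fun θ hθ ↦
    mul_nonneg (sin_nonneg_of_nonneg_of_le_pi hθ.1 (by linarith [hθ.2, pi_pos])) (exp_pos _).le

lemma integral_sin_mul_weightProfile_cos_le {d A : ℝ} (hd : 2 ≤ d) (hA : 0 ≤ A) :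
    ∫ θ in 0..π / 2, sin θ * weightProfile d A (cos θ) ≤ d * (d + 3) / (d - 1) / (1 + A) :=
  (integral_sin_mul_comp_cos (continuousOn_weightProfile (by linarith) A)).trans_le
    (integral_weightProfile_le hd hA)

/-- The curvature `a` of the quadratic weight attached to a centre `y` with `‖y‖² = B`, as a
function of `σ = 1 - ρ²`. It is the solution of `a / (1 - a σ) = e^{-B} α`, where
`α = weightSlope d`. -/
def weightCurvature (d B σ : ℝ) : ℝ :=
  exp (-B) * weightSlope d / (1 + exp (-B) * weightSlope d * σ)

section WeightCurvature

variable {d B σ : ℝ}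

lemma one_add_exp_mul_weightSlope_mul_pos (hd : 0 ≤ d) (hσ : 0 ≤ σ) :
    0 < 1 + exp (-B) * weightSlope d * σ := by
  have := weightSlope_pos hd
  positivity

lemma one_sub_weightCurvature_mul (hd : 0 ≤ d) (hσ : 0 ≤ σ) :
    1 - weightCurvature d B σ * σ = (1 + exp (-B) * weightSlope d * σ)⁻¹ := by
  have := one_add_exp_mul_weightSlope_mul_pos (B := B) hd hσ
  unfold weightCurvature; field_simp; ring

lemma weightCurvature_mul_lt_one (hd : 0 ≤ d) (hσ : 0 ≤ σ) : weightCurvature d B σ * σ < 1 := by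
  rw [← sub_pos, one_sub_weightCurvature_mul hd hσ]
  exact inv_pos.2 (one_add_exp_mul_weightSlope_mul_pos hd hσ)

lemma weightCurvature_div_one_sub_mul (hd : 0 ≤ d) (hσ : 0 ≤ σ) :
    weightCurvature d B σ / (1 - weightCurvature d B σ * σ) = exp (-B) * weightSlope d := by
  rw [one_sub_weightCurvature_mul hd hσ, div_inv_eq_mul, weightCurvature,
    div_mul_cancel₀ _ (one_add_exp_mul_weightSlope_mul_pos hd hσ).ne']

lemma weightCurvature_add_sq_mul_div (hd : 0 ≤ d) (hσ : 0 ≤ σ) :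
    weightCurvature d B σ
      + weightCurvature d B σ ^ 2 * σ / (1 - weightCurvature d B σ * σ)
      = exp (-B) * weightSlope d := by
  have := (sub_pos.2 (weightCurvature_mul_lt_one (B := B) hd hσ)).ne'
  rw [← weightCurvature_div_one_sub_mul hd hσ]
  field_simp; ring

lemma exp_mul_weightSlope_sub_weightCurvature_le (hd : 0 ≤ d) (hσ : 0 ≤ σ) :
    exp (-B) * weightSlope d - weightCurvature d B σ
      ≤ exp (-B) ^ 2 * weightSlope d ^ 2 * σ := by
  have := one_add_exp_mul_weightSlope_mul_pos (B := B) hd hσ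
  have hα := weightSlope_pos hd
  calc exp (-B) * weightSlope d - weightCurvature d B σ
      = exp (-B) ^ 2 * weightSlope d ^ 2 * σ / (1 + exp (-B) * weightSlope d * σ) := by
        unfold weightCurvature; field_simp; ring
    _ ≤ _ := div_le_self (by positivity)
        (le_add_of_nonneg_right (show 0 ≤ exp (-B) * weightSlope d * σ by positivity))

end WeightCurvature

lemma exp_neg_mul_one_add_le_one (B : ℝ) : exp (-B) * (1 + B) ≤ 1 := by
  rw [exp_neg, inv_mul_le_one₀ (exp_pos B), add_comm]
  exact add_one_le_exp B

lemma log_one_add_mul_le {q M : ℝ} (hq0 : 0 ≤ q) (hq1 : q ≤ 1) (hM0 : 0 ≤ M) (hM1 : M ≤ 1) :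
    log (1 + q * M) ≤ log (1 + M) - (1 - q) * M / 2 := by
  have hlog := log_le_sub_one_of_pos (x := (1 + q * M) / (1 + M)) (by positivity)
  rw [log_div (by positivity) (by positivity)] at hlog
  have hratio : (1 + q * M) / (1 + M) - 1 ≤ -((1 - q) * M / 2) := by
    rw [sub_le_iff_le_add, div_le_iff₀ (by positivity)]
    linarith [mul_nonneg (mul_nonneg (sub_nonneg.2 hq1) hM0) (sub_nonneg.2 hM1)]
  linarith

lemma exp_le_weightProfile {d A B Q ρ : ℝ} (hd : 2 ≤ d) (hρ : ρ ^ 2 ≤ 1) (hA : 0 ≤ A)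
    (hB : 0 ≤ B) (hQ : Q ≤ (A + ρ ^ 2) * (1 + B)) (hQ0 : 0 ≤ Q) :
    exp (d / 2 * log (1 + exp (-B) * weightSlope d * (1 - ρ ^ 2))
      + (exp (-B) * weightSlope d * (Q - (1 - ρ ^ 2) * (A - B))
        - weightCurvature d B (1 - ρ ^ 2) * Q) / 2) ≤ weightProfile d (exp (-B) * A) ρ := by
  have hσ : 0 ≤ 1 - ρ ^ 2 := sub_nonneg.2 hρ
  have hα := weightSlope_pos (d := d) (by linarith)
  have hα1 := weightSlope_le_one (d := d) (by linarith)
  have hqB := exp_neg_mul_one_add_le_one B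
  have hq1 : exp (-B) ≤ 1 := exp_le_one_iff.2 (neg_nonpos.2 hB)
  have hcurv := exp_mul_weightSlope_sub_weightCurvature_le (d := d) (B := B) (by linarith) hσ
  set q := exp (-B)
  set α := weightSlope d
  set σ := 1 - ρ ^ 2
  have hq : 0 < q := exp_pos _
  have hlog := log_one_add_mul_le (M := α * σ) hq.le hq1 (by positivity)
    (mul_le_one₀ hα1 hσ (by linarith [sq_nonneg ρ]))
  rw [← mul_assoc] at hlog
  have hlog_mul : d / 2 * (log (1 + q * α * σ) - log (1 + α * σ)) ≤ -((1 - q) * (α * σ) / 2) := by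
    have : 0 ≤ (1 - q) * (α * σ) := mul_nonneg (sub_nonneg.2 hq1) (by positivity)
    nlinarith
  have hquad : (q * α - weightCurvature d B σ) * Q ≤ q * α * (α * σ) * (A + ρ ^ 2) :=
    calc (q * α - weightCurvature d B σ) * Q ≤ q ^ 2 * α ^ 2 * σ * ((A + ρ ^ 2) * (1 + B)) := by
          gcongr
      _ = q * α * (α * σ) * (A + ρ ^ 2) * (q * (1 + B)) := by ring
      _ ≤ q * α * (α * σ) * (A + ρ ^ 2) := mul_le_of_le_one_right (by positivity) hqB
  have hsum : 0 ≤ α * σ * (1 - q * (1 + B)) + α * (α * σ) * (1 - q * ρ ^ 2) :=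
    add_nonneg (mul_nonneg (by positivity) (sub_nonneg.2 hqB))
      (mul_nonneg (by positivity) (sub_nonneg.2 (mul_le_one₀ hq1 (sq_nonneg ρ) hρ)))
  refine exp_le_exp.2 ?_
  linarith

lemma norm_sq_norm_mul_le {F : Type*} [SeminormedAddCommGroup F] {x : F} {t a b : ℝ}
    (hx : ‖x‖ ≤ a) (ht : ‖t‖ ≤ b) : ‖‖x‖ ^ 2 * t‖ ≤ a ^ 2 * b :=
  norm_mul_le_of_le (by rw [norm_pow, norm_norm]; gcongr) ht

section InnerProductSpace

open Module

open scoped Gradient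

variable {E : Type*} [NormedAddCommGroup E] [InnerProductSpace ℝ E]

lemma norm_inner_le_of_le {x y : E} {a b : ℝ} (hx : ‖x‖ ≤ a) (hy : ‖y‖ ≤ b) :
    ‖inner ℝ x y‖ ≤ a * b :=
  (norm_inner_le_norm x y).trans (mul_le_mul hx hy (norm_nonneg y) ((norm_nonneg x).trans hx))

lemma continuous_gradient [CompleteSpace E] {f : E → ℝ} (hf : ContDiff ℝ 1 f) :
    Continuous (∇ f) :=
  (InnerProductSpace.toDual ℝ E).symm.continuous.comp (hf.continuous_fderiv one_ne_zero)

lemma hasCompactSupport_gradient [CompleteSpace E] {f : E → ℝ} (hf : HasCompactSupport f) :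
    HasCompactSupport (∇ f) :=
  (hf.fderiv (𝕜 := ℝ)).comp_left (map_zero (InnerProductSpace.toDual ℝ E).symm)

lemma gradient_comp_add_right [CompleteSpace E] (f : E → ℝ) (x y : E) :
    ∇ (fun z ↦ f (z + y)) x = ∇ f (x + y) := by
  rw [gradient, gradient, fderiv_comp_add_right]

lemma cos_smul_add_sin_smul_reflection (θ : ℝ) (u v : E) :
    cos θ • (cos θ • u + sin θ • v) + sin θ • (sin θ • u - cos θ • v) = u := by
  rw [show cos θ • (cos θ • u + sin θ • v) + sin θ • (sin θ • u - cos θ • v)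
    = (sin θ ^ 2 + cos θ ^ 2) • u by module, sin_sq_add_cos_sq, one_smul]

lemma norm_neg_sin_smul_add_cos_smul_le (θ : ℝ) (u v : E) :
    ‖-sin θ • u + cos θ • v‖ ≤ ‖u‖ + ‖v‖ := by
  refine norm_add_le_of_le ?_ ?_ <;> rw [norm_smul]
  · exact mul_le_of_le_one_left (norm_nonneg _) (by simpa using abs_sin_le_one θ)
  · exact mul_le_of_le_one_left (norm_nonneg _) (abs_cos_le_one θ)

lemma inner_le_half_sq_norm_mul_exp_add (x y : E) (k : ℝ) :
    inner ℝ x y ≤ (‖x‖ ^ 2 * exp k + ‖y‖ ^ 2 * exp (-k)) / 2 := by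
  have hsq : ∀ t : ℝ, exp t = exp (t / 2) ^ 2 := fun t ↦ by rw [← exp_nat_mul]; ring_nf
  have hinv : exp (k / 2) * exp (-k / 2) = 1 := by rw [← exp_add]; ring_nf; exact exp_zero
  rw [hsq k, hsq (-k)]
  linarith [real_inner_le_norm x y, two_mul_le_add_sq (‖x‖ * exp (k / 2)) (‖y‖ * exp (-k / 2)),
    congrArg (‖x‖ * ‖y‖ * ·) hinv]

/-- The weight `h` for which the ratio `e^{h(z) - h(u)}` is used in the arithmetic-geometric mean
inequality: a multiple of the squared distance of `z` to `-(1 + ρ) y`. -/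
def quadraticWeight (y : E) (ρ : ℝ) (z : E) : ℝ :=
  weightCurvature (finrank ℝ E) (‖y‖ ^ 2) (1 - ρ ^ 2) / 2 * ‖z + (1 + ρ) • y‖ ^ 2

lemma continuous_quadraticWeight (y : E) (ρ : ℝ) : Continuous (quadraticWeight y ρ) := by
  unfold quadraticWeight; fun_prop

lemma sq_norm_add_smul_le (x y : E) (ρ : ℝ) :
    ‖x + ρ • y‖ ^ 2 ≤ (‖x‖ ^ 2 + ρ ^ 2) * (1 + ‖y‖ ^ 2) := by
  have hnorm : ‖x + ρ • y‖ ≤ ‖x‖ + |ρ| * ‖y‖ := by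
    simpa only [norm_smul, norm_eq_abs] using norm_add_le x (ρ • y)
  calc ‖x + ρ • y‖ ^ 2 ≤ (‖x‖ + |ρ| * ‖y‖) ^ 2 := by gcongr
    _ ≤ (‖x‖ ^ 2 + |ρ| ^ 2) * (1 + ‖y‖ ^ 2) := by linarith [sq_nonneg (‖x‖ * ‖y‖ - |ρ|)]
    _ = _ := by rw [sq_abs]

lemma sq_norm_smul_add (x y : E) (ρ : ℝ) :
    ‖ρ • x + y‖ ^ 2 = ‖x + ρ • y‖ ^ 2 - (1 - ρ ^ 2) * (‖x‖ ^ 2 - ‖y‖ ^ 2) := by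
  rw [norm_add_sq_real, norm_add_sq_real, norm_smul, norm_smul, inner_smul_left, inner_smul_right,
    mul_pow, mul_pow, norm_eq_abs, sq_abs, conj_trivial]
  ring

lemma exp_quadraticWeight_sub {ρ s : ℝ} (hs : ρ ^ 2 + s ^ 2 = 1) (y u v : E) :
    exp (quadraticWeight y ρ (ρ • u + s • v) - quadraticWeight y ρ u)
      = exp (weightCurvature (finrank ℝ E) (‖y‖ ^ 2) (1 - ρ ^ 2) / 2 * ‖ρ • (u + y) + y‖ ^ 2
          - quadraticWeight y ρ u)
        * exp (weightCurvature (finrank ℝ E) (‖y‖ ^ 2) (1 - ρ ^ 2) * (1 - ρ ^ 2) / 2 * ‖v‖ ^ 2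
          + inner ℝ ((weightCurvature (finrank ℝ E) (‖y‖ ^ 2) (1 - ρ ^ 2) * s)
            • (ρ • (u + y) + y)) v) := by
  have hsum : ρ • u + s • v + (1 + ρ) • y = ρ • (u + y) + y + s • v := by module
  rw [← exp_add, quadraticWeight, hsum, norm_add_sq_real, norm_smul, mul_pow, inner_smul_left,
    inner_smul_right, norm_eq_abs, sq_abs, conj_trivial, show 1 - ρ ^ 2 = s ^ 2 by linarith]
  ring_nf

end InnerProductSpace

lemma integrable_sq_norm_mul {α F : Type*} [TopologicalSpace α] [MeasurableSpace α]
    [OpensMeasurableSpace α] {μ : Measure α} [IsFiniteMeasure μ] [SeminormedAddCommGroup F]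
    {G : α → F} {φ : α → ℝ} {B C : ℝ} (hG : Continuous G) (hB : ∀ x, ‖G x‖ ≤ B) (hφ : Continuous φ)
    (hC : ∀ x, ‖φ x‖ ≤ C) : Integrable (fun x ↦ ‖G x‖ ^ 2 * φ x) μ :=
  .of_bound (Continuous.aestronglyMeasurable (by fun_prop)) (B ^ 2 * C)
    (.of_forall fun x ↦ norm_sq_norm_mul_le (hB x) (hC x))

lemma integrable_sq_norm_div_one_add {α F : Type*} [TopologicalSpace α] [MeasurableSpace α]
    [OpensMeasurableSpace α] {μ : Measure α} [IsFiniteMeasure μ] [SeminormedAddCommGroup F]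
    {G : α → F} {a : α → ℝ} {B : ℝ} (hG : Continuous G) (hB : ∀ x, ‖G x‖ ≤ B) (ha : Continuous a)
    (ha0 : ∀ x, 0 ≤ a x) : Integrable (fun x ↦ ‖G x‖ ^ 2 / (1 + a x)) μ := by
  have hpos : ∀ x, 0 < 1 + a x := fun x ↦ add_pos_of_pos_of_nonneg one_pos (ha0 x)
  simp_rw [div_eq_mul_inv]
  refine integrable_sq_norm_mul hG hB (by fun_prop (disch := exact fun x ↦ (hpos x).ne'))
    (C := 1) fun x ↦ ?_
  rw [norm_inv, norm_of_nonneg (hpos x).le]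
  exact inv_le_one_of_one_le₀ (le_add_of_nonneg_right (ha0 x))

lemma integrable_prod_of_integral_le {α β : Type*} [MeasurableSpace α] [MeasurableSpace β]
    {μ : Measure α} {ν : Measure β} [SFinite ν] {W : α × β → ℝ} {Ψ : α → ℝ}
    (hW : AEStronglyMeasurable W (μ.prod ν)) (hW0 : 0 ≤ W)
    (hWi : ∀ u, Integrable (fun v ↦ W (u, v)) ν) (hΨ : Integrable Ψ μ)
    (hle : ∀ u, ∫ v, W (u, v) ∂ν ≤ Ψ u) : Integrable W (μ.prod ν) := by
  refine (integrable_prod_iff hW).2 ⟨.of_forall hWi, hΨ.mono' hW.norm.integral_prod_right'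
    (.of_forall fun u ↦ ?_)⟩
  simp_rw [Real.norm_of_nonneg (hW0 _)]
  rw [Real.norm_of_nonneg (integral_nonneg fun v ↦ hW0 (u, v))]
  exact hle u

lemma integrable_integral_of_integrable_conv {M F : Type*} [AddMonoid M] [MeasurableSpace M]
    [MeasurableAdd₂ M] [NormedAddCommGroup F] [NormedSpace ℝ F] {μ ν : Measure M} [SFinite ν]
    {f : M → F} (hf : Integrable f (μ ∗ ν)) : Integrable (fun x ↦ ∫ y, f (x + y) ∂ν) μ :=
  ((integrable_map_measure hf.1 (by fun_prop)).1 hf).integral_prod_left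

section Variance

open ProbabilityTheory

variable {Ω : Type*} [MeasurableSpace Ω] {μ : Measure Ω} {X Y : Ω → ℝ}

lemma sq_covariance_le_variance_mul_variance [IsFiniteMeasure μ] (hX : MemLp X 2 μ)
    (hY : MemLp Y 2 μ) : cov[X, Y; μ] ^ 2 ≤ Var[X; μ] * Var[Y; μ] := by
  have hquad : ∀ t : ℝ, 0 ≤ Var[X; μ] * (t * t) + 2 * cov[X, Y; μ] * t + Var[Y; μ] := fun t ↦ by
    have h := variance_nonneg ((t • X) + Y) μ
    rw [variance_add (hX.const_smul t) hY, variance_smul, covariance_smul_left] at h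
    linarith
  have hdiscrim := discrim_le_zero hquad
  rw [discrim] at hdiscrim
  linarith

lemma integral_sq_sub_const [IsProbabilityMeasure μ] (hX : MemLp X 2 μ) (c : ℝ) :
    ∫ ω, (X ω - c) ^ 2 ∂μ = Var[X; μ] + (∫ ω, X ω ∂μ - c) ^ 2 := by
  have h := variance_eq_sub (hX.sub (memLp_const c))
  have hvar : Var[X - fun _ ↦ c; μ] = Var[X; μ] := variance_sub_const hX.aestronglyMeasurable c
  have hmean : ∫ ω, (X - fun _ ↦ c : Ω → ℝ) ω ∂μ = ∫ ω, X ω ∂μ - c := by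
    simp only [Pi.sub_apply]
    rw [integral_sub (hX.integrable one_le_two) (integrable_const c), integral_const,
      probReal_univ, one_smul]
  rw [hvar, hmean] at h
  simp only [Pi.pow_apply, Pi.sub_apply] at h
  linarith

end Variance

section StdGaussian

open Module ContinuousLinearMap

open scoped Gradient ProbabilityTheory

local notation "γ" => ProbabilityTheory.stdGaussian

lemma rpow_neg_mul_rpow_pi_div {b : ℝ} (hb : 0 < b) (p : ℝ) :
    (2 * π) ^ (-p) * (π / (b / 2)) ^ p = b ^ (-p) := by
  rw [show π / (b / 2) = 2 * π * b⁻¹ by field_simp,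
    mul_rpow (x := 2 * π) (by positivity) (by positivity), ← mul_assoc,
    ← rpow_add (by positivity), neg_add_cancel, rpow_zero, one_mul, inv_rpow hb.le,
    rpow_neg hb.le]

variable {E : Type*} [NormedAddCommGroup E] [InnerProductSpace ℝ E]

/-- The Lebesgue density of the standard Gaussian measure on a finite-dimensional inner product
space. -/
def gaussianDensity (x : E) : ℝ := (2 * π) ^ (-(finrank ℝ E : ℝ) / 2) * exp (-‖x‖ ^ 2 / 2)

lemma gaussianDensity_pos (x : E) : 0 < gaussianDensity x := by
  unfold gaussianDensity; positivity

lemma continuous_gaussianDensity : Continuous (gaussianDensity (E := E)) := by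
  unfold gaussianDensity; fun_prop

lemma gaussianDensity_mul_exp (b : ℝ) (w v : E) :
    gaussianDensity v * exp (b / 2 * ‖v‖ ^ 2 + inner ℝ w v)
      = (2 * π) ^ (-(finrank ℝ E : ℝ) / 2) * exp (-((1 - b) / 2) * ‖v‖ ^ 2 + inner ℝ w v) := by
  rw [gaussianDensity, mul_assoc, ← exp_add]
  ring_nf

lemma hasFDerivAt_gaussianDensity (x : E) :
    HasFDerivAt gaussianDensity (-(gaussianDensity x) • innerSL ℝ x) x := by
  have hsq : HasFDerivAt (fun x : E ↦ -‖x‖ ^ 2 / 2) (-innerSL ℝ x) x := by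
    refine (((hasStrictFDerivAt_norm_sq x).hasFDerivAt.neg).mul_const (2⁻¹ : ℝ)).congr_fderiv ?_
    ext v; simp
  refine (hsq.exp.const_mul _).congr_fderiv ?_
  ext v; simp [gaussianDensity]; ring

lemma gaussianDensity_add (x y : E) :
    gaussianDensity (x + y) = gaussianDensity x * exp (-inner ℝ y x - ‖y‖ ^ 2 / 2) := by
  rw [gaussianDensity, gaussianDensity, mul_assoc, ← exp_add, norm_add_sq_real, real_inner_comm]
  ring_nf

lemma exp_mul_neg_inner_sub (y x : E) (k : ℝ) :
    exp (k * (-inner ℝ y x - ‖y‖ ^ 2 / 2))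
      = exp (-k * ‖y‖ ^ 2 / 2) * exp (0 / 2 * ‖x‖ ^ 2 + inner ℝ (-k • y) x) := by
  rw [← exp_add, real_inner_smul_left]
  ring_nf

variable [FiniteDimensional ℝ E] [MeasurableSpace E] [BorelSpace E]

lemma integrable_exp_neg_mul_sq_norm_add_inner {b : ℝ} (hb : 0 < b) (w : E) :
    Integrable fun v : E ↦ exp (-b * ‖v‖ ^ 2 + inner ℝ w v) := by
  have h := (GaussianFourier.integrable_cexp_neg_mul_sq_norm_add (b := (b : ℂ))
    (by simpa using hb) 1 w).norm
  refine h.congr (.of_forall fun v ↦ ?_)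
  simp only [Complex.norm_exp]
  norm_cast
  simp

lemma integral_exp_neg_mul_sq_norm_add_inner {b : ℝ} (hb : 0 < b) (w : E) :
    ∫ v : E, exp (-b * ‖v‖ ^ 2 + inner ℝ w v)
      = (π / b) ^ (finrank ℝ E / 2 : ℝ) * exp (‖w‖ ^ 2 / (4 * b)) := by
  have hsquare : ∀ v : E, exp (-b * ‖v‖ ^ 2 + inner ℝ w v)
      = exp (-b * ‖v - (2 * b)⁻¹ • w‖ ^ 2) * exp (‖w‖ ^ 2 / (4 * b)) := fun v ↦ by
    rw [← exp_add, norm_sub_sq_real, inner_smul_right, norm_smul, real_inner_comm,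
      Real.norm_of_nonneg (by positivity)]
    congr 1; field_simp; ring
  simp_rw [hsquare]
  rw [integral_mul_const, integral_sub_right_eq_self (fun v : E ↦ exp (-b * ‖v‖ ^ 2)),
    GaussianFourier.integral_rexp_neg_mul_sq_norm hb]

lemma integrable_gaussianDensity : Integrable (gaussianDensity (E := E)) := by
  have h := (integrable_exp_neg_mul_sq_norm_add_inner (E := E) one_half_pos 0).const_mul
    ((2 * π) ^ (-(finrank ℝ E : ℝ) / 2))
  refine h.congr (.of_forall fun v ↦ ?_)
  simpa using (gaussianDensity_mul_exp 0 0 v).symm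

lemma stdGaussian_eq_withDensity :
    γ E = volume.withDensity fun x ↦ ENNReal.ofReal (gaussianDensity x) := by
  have := isFiniteMeasure_withDensity_ofReal (integrable_gaussianDensity (E := E)).2
  refine Measure.ext_of_charFun (funext fun t ↦ ?_)
  have hintegral := GaussianFourier.integral_cexp_neg_mul_sq_norm_add (V := E) (b := 1 / 2)
    (by norm_num) Complex.I t
  have hdensity : ∀ x : E, gaussianDensity x • Complex.exp (inner ℝ x t * Complex.I)
      = ((2 * π) ^ (-(finrank ℝ E : ℝ) / 2) : ℝ)
        * Complex.exp (-(1 / 2) * ‖x‖ ^ 2 + Complex.I * inner ℝ t x) := fun x ↦ by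
    rw [gaussianDensity, Complex.real_smul, Complex.ofReal_mul, Complex.ofReal_exp, mul_assoc,
      ← Complex.exp_add, real_inner_comm]
    push_cast; ring_nf
  have hnormalization : (((2 * π) ^ (-(finrank ℝ E : ℝ) / 2) : ℝ) : ℂ)
      * (π / (1 / 2)) ^ (finrank ℝ E / 2 : ℂ) = 1 := by
    have h := rpow_neg_mul_rpow_pi_div one_pos (finrank ℝ E / 2 : ℝ)
    rw [one_rpow, ← neg_div] at h
    rw [← Complex.ofReal_inj, Complex.ofReal_mul, Complex.ofReal_cpow (x := π / (1 / 2))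
      (by positivity)] at h
    simpa using h
  rw [ProbabilityTheory.charFun_stdGaussian, charFun_apply,
    integral_withDensity_eq_integral_toReal_smul
      continuous_gaussianDensity.measurable.ennreal_ofReal
      (.of_forall fun _ ↦ ENNReal.ofReal_lt_top)]
  simp_rw [ENNReal.toReal_ofReal (gaussianDensity_pos _).le, hdensity]
  rw [integral_const_mul, hintegral, ← mul_assoc, hnormalization, one_mul, Complex.I_sq]
  ring_nf

lemma integral_stdGaussian (f : E → ℝ) :
    ∫ x, f x ∂γ E = ∫ x, gaussianDensity x * f x := by
  rw [stdGaussian_eq_withDensity, integral_withDensity_eq_integral_toReal_smul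
    continuous_gaussianDensity.measurable.ennreal_ofReal (.of_forall fun _ ↦ ENNReal.ofReal_lt_top)]
  simp_rw [ENNReal.toReal_ofReal (gaussianDensity_pos _).le, smul_eq_mul]

lemma integrable_stdGaussian_iff {f : E → ℝ} :
    Integrable f (γ E) ↔ Integrable fun x ↦ gaussianDensity x * f x := by
  rw [stdGaussian_eq_withDensity, integrable_withDensity_iff_integrable_smul'
    continuous_gaussianDensity.measurable.ennreal_ofReal (.of_forall fun _ ↦ ENNReal.ofReal_lt_top)]
  simp_rw [ENNReal.toReal_ofReal (gaussianDensity_pos _).le, smul_eq_mul]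

lemma integrable_exp_sq_norm_add_inner_stdGaussian {b : ℝ} (hb : b < 1) (w : E) :
    Integrable (fun v ↦ exp (b / 2 * ‖v‖ ^ 2 + inner ℝ w v)) (γ E) := by
  rw [integrable_stdGaussian_iff]
  simp_rw [gaussianDensity_mul_exp]
  exact (integrable_exp_neg_mul_sq_norm_add_inner (by linarith) w).const_mul _

lemma integral_exp_sq_norm_add_inner_stdGaussian {b : ℝ} (hb : b < 1) (w : E) :
    ∫ v, exp (b / 2 * ‖v‖ ^ 2 + inner ℝ w v) ∂γ E
      = (1 - b) ^ (-(finrank ℝ E / 2 : ℝ)) * exp (‖w‖ ^ 2 / (2 * (1 - b))) := by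
  rw [integral_stdGaussian]
  simp_rw [gaussianDensity_mul_exp]
  rw [integral_const_mul, integral_exp_neg_mul_sq_norm_add_inner (by linarith), ← mul_assoc,
    neg_div, rpow_neg_mul_rpow_pi_div (by linarith), show 4 * ((1 - b) / 2) = 2 * (1 - b) by ring]

lemma measurePreserving_reflection_stdGaussian (θ : ℝ) :
    MeasurePreserving (fun p : E × E ↦ (cos θ • p.1 + sin θ • p.2, sin θ • p.1 - cos θ • p.2))
      ((γ E).prod (γ E)) ((γ E).prod (γ E)) := by
  have hneg : MeasurePreserving (fun x : E ↦ -x) (γ E) (γ E) :=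
    ⟨measurable_neg, ProbabilityTheory.stdGaussian_map (LinearIsometryEquiv.neg ℝ)⟩
  have hrotation : MeasurePreserving (ContinuousLinearMap.rotation θ : E × E → E × E)
      ((γ E).prod (γ E)) ((γ E).prod (γ E)) :=
    ⟨by fun_prop, ProbabilityTheory.IsGaussian.map_rotation_eq_self
      ProbabilityTheory.integral_id_stdGaussian θ⟩
  convert ((MeasurePreserving.id (γ E)).prod hneg).comp hrotation using 1
  funext p
  simp [ContinuousLinearMap.rotation_apply, neg_add_eq_sub, sub_eq_add_neg]

lemma integral_comp_reflection_stdGaussian {H : E × E → ℝ} (hH : Continuous H) (θ : ℝ) :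
    ∫ p : E × E, H (cos θ • p.1 + sin θ • p.2, sin θ • p.1 - cos θ • p.2) ∂(γ E).prod (γ E)
      = ∫ p, H p ∂(γ E).prod (γ E) := by
  have h := measurePreserving_reflection_stdGaussian (E := E) θ
  rw [← integral_map h.aemeasurable hH.aestronglyMeasurable, h.map_eq]

lemma integrable_norm_stdGaussian : Integrable (fun x : E ↦ ‖x‖) (γ E) :=
  ProbabilityTheory.IsGaussian.integrable_id.norm

lemma integral_mul_inner_stdGaussian {f : E → ℝ} {w : E} (hf : Differentiable ℝ f)
    (hfi : Integrable f (γ E)) (hf' : Integrable (fun v ↦ fderiv ℝ f v w) (γ E))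
    (hfw : Integrable (fun v ↦ f v * inner ℝ w v) (γ E)) :
    ∫ v, f v * inner ℝ w v ∂γ E = ∫ v, fderiv ℝ f v w ∂γ E := by
  have hdensity : ∀ v : E, fderiv ℝ gaussianDensity v w = -(gaussianDensity v * inner ℝ w v) :=
    fun v ↦ by simp [(hasFDerivAt_gaussianDensity v).fderiv, real_inner_comm]
  rw [integrable_stdGaussian_iff] at hfi hf' hfw
  have hparts := integral_mul_fderiv_eq_neg_fderiv_mul_of_integrable (μ := volume) (f := f)
    (g := gaussianDensity) (v := w) (hf'.congr (.of_forall fun v ↦ mul_comm _ _))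
    (hfw.neg.congr (.of_forall fun v ↦ by simp only [hdensity, Pi.neg_apply]; ring))
    (hfi.congr (.of_forall fun v ↦ mul_comm _ _)) (fun v _ ↦ hf v)
    fun v _ ↦ (hasFDerivAt_gaussianDensity v).differentiableAt
  rw [integral_stdGaussian, integral_stdGaussian, ← neg_inj, ← integral_neg]
  simp_rw [hdensity] at hparts
  convert hparts using 1
  · congr 1; ext v; ring
  · simp_rw [mul_comm]

/-- The correlation `∬ ⟨G u, G (cos θ u + sin θ v)⟩ dγ(u) dγ(v)` of the values of `G` at two
standard Gaussian points which are themselves `cos θ`-correlated. -/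
def gaussianCorrelation {F : Type*} [NormedAddCommGroup F] [InnerProductSpace ℝ F] (G : E → F)
    (θ : ℝ) : ℝ :=
  ∫ p : E × E, inner ℝ (G p.1) (G (cos θ • p.1 + sin θ • p.2)) ∂(γ E).prod (γ E)

lemma continuous_gaussianCorrelation {F : Type*} [NormedAddCommGroup F] [InnerProductSpace ℝ F]
    {G : E → F} (hG : Continuous G) {B : ℝ} (hB : ∀ x, ‖G x‖ ≤ B) :
    Continuous (gaussianCorrelation G) :=
  continuous_of_dominated (bound := fun _ ↦ B * B)
    (fun θ ↦ Continuous.aestronglyMeasurable (by fun_prop))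
    (fun θ ↦ .of_forall fun p ↦ norm_inner_le_of_le (hB _) (hB _)) (integrable_const _)
    (.of_forall fun p ↦ by fun_prop)

lemma gaussianCorrelation_zero_sub_pi_div_two {f : E → ℝ} (hf : MemLp f 2 (γ E)) :
    gaussianCorrelation f 0 - gaussianCorrelation f (π / 2) = Var[f; γ E] := by
  simp only [gaussianCorrelation, cos_zero, sin_zero, cos_pi_div_two, sin_pi_div_two, one_smul,
    zero_smul, add_zero, zero_add, Real.inner_apply]
  rw [ProbabilityTheory.variance_eq_sub hf, integral_fun_fst (fun x ↦ f x * f x),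
    integral_prod_mul, probReal_univ, one_smul, sq]
  simp only [sq, Pi.mul_apply]

lemma integrable_norm_fst_add_norm_snd_stdGaussian :
    Integrable (fun p : E × E ↦ ‖p.1‖ + ‖p.2‖) ((γ E).prod (γ E)) :=
  (integrable_norm_stdGaussian.comp_fst _).add (integrable_norm_stdGaussian.comp_snd _)

variable {f : E → ℝ} {A B : ℝ}

lemma hasDerivAt_gaussianCorrelation_integral (hf : ContDiff ℝ 1 f) (hA : ∀ x, ‖f x‖ ≤ A)
    (hB : ∀ x, ‖∇ f x‖ ≤ B) (θ : ℝ) :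
    HasDerivAt (gaussianCorrelation f) (∫ p : E × E, f p.1
      * inner ℝ (∇ f (cos θ • p.1 + sin θ • p.2)) (-sin θ • p.1 + cos θ • p.2)
        ∂(γ E).prod (γ E)) θ := by
  have hfc := hf.continuous
  have hf'c := continuous_gradient hf
  have hpath : ∀ (p : E × E) (θ : ℝ), HasDerivAt (fun θ ↦ cos θ • p.1 + sin θ • p.2)
      (-sin θ • p.1 + cos θ • p.2) θ := fun p θ ↦
    ((hasDerivAt_cos θ).smul_const p.1).add ((hasDerivAt_sin θ).smul_const p.2)
  refine (hasDerivAt_integral_of_dominated_loc_of_deriv_le (s := univ)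
    (F := fun θ (p : E × E) ↦ inner ℝ (f p.1) (f (cos θ • p.1 + sin θ • p.2)))
    (F' := fun θ (p : E × E) ↦ f p.1
      * inner ℝ (∇ f (cos θ • p.1 + sin θ • p.2)) (-sin θ • p.1 + cos θ • p.2))
    (bound := fun p ↦ A * (B * (‖p.1‖ + ‖p.2‖))) Filter.univ_mem
    (.of_forall fun θ ↦ Continuous.aestronglyMeasurable (by fun_prop))
    (.of_bound (Continuous.aestronglyMeasurable (by fun_prop)) (A * A)
      (.of_forall fun p ↦ norm_inner_le_of_le (hA _) (hA _)))
    (Continuous.aestronglyMeasurable (by fun_prop))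
    (.of_forall fun p θ _ ↦ norm_mul_le_of_le (hA _)
      (norm_inner_le_of_le (hB _) (norm_neg_sin_smul_add_cos_smul_le θ _ _)))
    ((integrable_norm_fst_add_norm_snd_stdGaussian.const_mul B).const_mul A)
    (.of_forall fun p θ _ ↦ ?_)).2
  simp only [Real.inner_apply, inner_gradient_left]
  exact ((hf.differentiable one_ne_zero _).hasFDerivAt.comp_hasDerivAt θ (hpath p θ)).const_mul _

lemma integral_comp_rotation_mul_inner_stdGaussian (hf : ContDiff ℝ 1 f) (hA : ∀ x, ‖f x‖ ≤ A)
    (hB : ∀ x, ‖∇ f x‖ ≤ B) (θ : ℝ) (u w : E) :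
    ∫ v, f (cos θ • u + sin θ • v) * inner ℝ w v ∂γ E
      = sin θ * ∫ v, inner ℝ w (∇ f (cos θ • u + sin θ • v)) ∂γ E := by
  have hfc := hf.continuous
  have hf'c := continuous_gradient hf
  have hfd := hf.differentiable one_ne_zero
  have hderiv : ∀ v, fderiv ℝ (fun v ↦ f (cos θ • u + sin θ • v)) v w
      = sin θ * inner ℝ w (∇ f (cos θ • u + sin θ • v)) := fun v ↦ by
    have haffine : HasFDerivAt (fun v : E ↦ cos θ • u + sin θ • v)
        (sin θ • ContinuousLinearMap.id ℝ E) v :=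
      ((hasFDerivAt_id v).const_smul (sin θ)).const_add _
    have hcomp := (hfd _).hasFDerivAt.comp v haffine
    rw [Function.comp_def] at hcomp
    simp [hcomp.fderiv]
  rw [integral_mul_inner_stdGaussian (by fun_prop), ← integral_const_mul]
  · simp_rw [hderiv]
  · exact .of_bound (Continuous.aestronglyMeasurable (by fun_prop)) A (.of_forall fun v ↦ hA _)
  · simp_rw [hderiv]
    exact .const_mul (.of_bound (Continuous.aestronglyMeasurable (by fun_prop)) (‖w‖ * B)
      (.of_forall fun v ↦ norm_inner_le_of_le le_rfl (hB _))) _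
  · exact ((integrable_norm_stdGaussian.const_mul ‖w‖).const_mul A).mono'
      (Continuous.aestronglyMeasurable (by fun_prop))
      (.of_forall fun v ↦ norm_mul_le_of_le (hA _) (norm_inner_le_norm _ _))

lemma integral_mul_inner_gradient_rotation_stdGaussian (hf : ContDiff ℝ 1 f)
    (hA : ∀ x, ‖f x‖ ≤ A) (hB : ∀ x, ‖∇ f x‖ ≤ B) (θ : ℝ) :
    ∫ p : E × E, f p.1 * inner ℝ (∇ f (cos θ • p.1 + sin θ • p.2)) (-sin θ • p.1 + cos θ • p.2)
        ∂(γ E).prod (γ E) = -(sin θ * gaussianCorrelation (∇ f) θ) := by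
  have hfc := hf.continuous
  have hf'c := continuous_gradient hf
  set H : E × E → ℝ := fun p ↦ -(f (cos θ • p.1 + sin θ • p.2) * inner ℝ (∇ f p.1) p.2)
  have h_int : Integrable H ((γ E).prod (γ E)) :=
    ((integrable_norm_stdGaussian.comp_snd _).const_mul B).const_mul A |>.mono'
      (Continuous.aestronglyMeasurable (by fun_prop)) (.of_forall fun p ↦ by
        rw [norm_neg]
        exact norm_mul_le_of_le (hA _) (norm_inner_le_of_le (hB _) le_rfl))
  calc _ = ∫ p : E × E, H (cos θ • p.1 + sin θ • p.2, sin θ • p.1 - cos θ • p.2)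
          ∂(γ E).prod (γ E) := by
        refine integral_congr_ae (.of_forall fun p ↦ ?_)
        simp only [H, cos_smul_add_sin_smul_reflection, ← mul_neg, ← inner_neg_right, neg_sub,
          neg_smul, neg_add_eq_sub]
    _ = ∫ p, H p ∂(γ E).prod (γ E) :=
        integral_comp_reflection_stdGaussian (by fun_prop) θ
    _ = ∫ u, ∫ v, H (u, v) ∂γ E ∂γ E := integral_prod _ h_int
    _ = ∫ u, -(sin θ * ∫ v, inner ℝ (∇ f u) (∇ f (cos θ • u + sin θ • v)) ∂γ E) ∂γ E := by
        simp only [H, integral_neg, integral_comp_rotation_mul_inner_stdGaussian hf hA hB]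
    _ = _ := by
        rw [integral_neg, integral_const_mul, gaussianCorrelation, integral_prod]
        exact .of_bound (Continuous.aestronglyMeasurable (by fun_prop)) (B * B)
          (.of_forall fun p ↦ norm_inner_le_of_le (hB _) (hB _))

lemma hasDerivAt_gaussianCorrelation (hf : ContDiff ℝ 1 f) (hA : ∀ x, ‖f x‖ ≤ A)
    (hB : ∀ x, ‖∇ f x‖ ≤ B) (θ : ℝ) :
    HasDerivAt (gaussianCorrelation f) (-(sin θ * gaussianCorrelation (∇ f) θ)) θ :=
  integral_mul_inner_gradient_rotation_stdGaussian hf hA hB θ ▸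
    hasDerivAt_gaussianCorrelation_integral hf hA hB θ

lemma variance_stdGaussian_eq_integral_gaussianCorrelation (hf : ContDiff ℝ 1 f)
    (hA : ∀ x, ‖f x‖ ≤ A) (hB : ∀ x, ‖∇ f x‖ ≤ B) :
    Var[f; γ E] = ∫ θ in 0..π / 2, sin θ * gaussianCorrelation (∇ f) θ := by
  have hcont := continuous_gaussianCorrelation (continuous_gradient hf) hB
  rw [← gaussianCorrelation_zero_sub_pi_div_two
    (.of_bound hf.continuous.aestronglyMeasurable A (.of_forall hA)), ← neg_inj, neg_sub,
    ← intervalIntegral.integral_neg]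
  exact (intervalIntegral.integral_eq_sub_of_hasDerivAt
    (fun θ _ ↦ hasDerivAt_gaussianCorrelation hf hA hB θ)
    (Continuous.intervalIntegrable (by fun_prop) _ _)).symm

lemma gaussianCorrelation_le_integral_sq_norm_mul {F : Type*} [NormedAddCommGroup F]
    [InnerProductSpace ℝ F] {G : E → F} {h Φ : E → ℝ} (hG : Continuous G)
    {B : ℝ} (hB : ∀ x, ‖G x‖ ≤ B) (hh : Continuous h) {θ : ℝ}
    (h_int : ∀ u, Integrable (fun v ↦ exp (h (cos θ • u + sin θ • v) - h u)) (γ E))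
    (hle : ∀ u, ∫ v, exp (h (cos θ • u + sin θ • v) - h u) ∂γ E ≤ Φ u)
    (hGΦ : Integrable (fun u ↦ ‖G u‖ ^ 2 * Φ u) (γ E)) :
    gaussianCorrelation G θ ≤ ∫ u, ‖G u‖ ^ 2 * Φ u ∂γ E := by
  set T : E × E → E × E := fun p ↦ (cos θ • p.1 + sin θ • p.2, sin θ • p.1 - cos θ • p.2)
  set W : E × E → ℝ := fun p ↦ ‖G p.1‖ ^ 2 * exp (h (cos θ • p.1 + sin θ • p.2) - h p.1)
  have hWc : Continuous W := by fun_prop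
  have hWu : ∀ u, ∫ v, W (u, v) ∂γ E ≤ ‖G u‖ ^ 2 * Φ u := fun u ↦ by
    simp only [W, integral_const_mul]
    exact mul_le_mul_of_nonneg_left (hle u) (by positivity)
  have hWi : Integrable W ((γ E).prod (γ E)) :=
    integrable_prod_of_integral_le hWc.aestronglyMeasurable (fun p ↦ by positivity)
      (fun u ↦ (h_int u).const_mul (‖G u‖ ^ 2)) hGΦ hWu
  have hWTi : Integrable (W ∘ T) ((γ E).prod (γ E)) :=
    (measurePreserving_reflection_stdGaussian θ).integrable_comp_of_integrable hWi
  calc gaussianCorrelation G θ ≤ ∫ p, (W p + (W ∘ T) p) / 2 ∂(γ E).prod (γ E) := by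
        refine integral_mono (.of_bound (Continuous.aestronglyMeasurable (by fun_prop)) (B * B)
          (.of_forall fun p ↦ norm_inner_le_of_le (hB _) (hB _))) ((hWi.add hWTi).div_const 2)
          fun p ↦ ?_
        simpa only [W, T, Function.comp_apply, cos_smul_add_sin_smul_reflection, neg_sub] using
          inner_le_half_sq_norm_mul_exp_add (G p.1) (G (cos θ • p.1 + sin θ • p.2))
            (h (cos θ • p.1 + sin θ • p.2) - h p.1)
    _ = ∫ p, W p ∂(γ E).prod (γ E) := by
        rw [integral_div, integral_add hWi hWTi]
        simp only [Function.comp_apply, T, integral_comp_reflection_stdGaussian hWc,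
          add_self_div_two]
    _ = ∫ u, ∫ v, W (u, v) ∂γ E ∂γ E := integral_prod _ hWi
    _ ≤ ∫ u, ‖G u‖ ^ 2 * Φ u ∂γ E := integral_mono hWi.integral_prod_left hGΦ hWu

lemma integrable_exp_quadraticWeight_sub {ρ s : ℝ} (hs : ρ ^ 2 + s ^ 2 = 1) (y u : E) :
    Integrable (fun v ↦ exp (quadraticWeight y ρ (ρ • u + s • v) - quadraticWeight y ρ u))
      (γ E) := by
  simp_rw [exp_quadraticWeight_sub hs]
  exact (integrable_exp_sq_norm_add_inner_stdGaussian (weightCurvature_mul_lt_one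
    (Nat.cast_nonneg _) (by linarith [sq_nonneg s])) _).const_mul _

lemma integral_exp_quadraticWeight_sub {ρ s : ℝ} (hs : ρ ^ 2 + s ^ 2 = 1) (y u : E) :
    ∫ v, exp (quadraticWeight y ρ (ρ • u + s • v) - quadraticWeight y ρ u) ∂γ E
      = exp (finrank ℝ E / 2
          * log (1 + exp (-‖y‖ ^ 2) * weightSlope (finrank ℝ E) * (1 - ρ ^ 2))
        + (exp (-‖y‖ ^ 2) * weightSlope (finrank ℝ E) * ‖ρ • (u + y) + y‖ ^ 2
          - weightCurvature (finrank ℝ E) (‖y‖ ^ 2) (1 - ρ ^ 2) * ‖u + y + ρ • y‖ ^ 2) / 2) := by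
  have hd : (0 : ℝ) ≤ finrank ℝ E := Nat.cast_nonneg _
  have hσ : 0 ≤ 1 - ρ ^ 2 := by linarith [sq_nonneg s]
  have hlt := weightCurvature_mul_lt_one (B := ‖y‖ ^ 2) hd hσ
  have hcurv := weightCurvature_add_sq_mul_div (B := ‖y‖ ^ 2) hd hσ
  have hpow : (1 - weightCurvature (finrank ℝ E) (‖y‖ ^ 2) (1 - ρ ^ 2) * (1 - ρ ^ 2))
      ^ (-(finrank ℝ E / 2 : ℝ)) = exp (finrank ℝ E / 2
        * log (1 + exp (-‖y‖ ^ 2) * weightSlope (finrank ℝ E) * (1 - ρ ^ 2))) := by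
    rw [rpow_def_of_pos (sub_pos.2 hlt), one_sub_weightCurvature_mul hd hσ, log_inv]
    ring_nf
  simp_rw [exp_quadraticWeight_sub hs]
  rw [integral_const_mul, integral_exp_sq_norm_add_inner_stdGaussian hlt, hpow, ← exp_add,
    ← exp_add, quadraticWeight, norm_smul, mul_pow, norm_eq_abs, sq_abs, mul_pow,
    show s ^ 2 = 1 - ρ ^ 2 by linarith, show u + (1 + ρ) • y = u + y + ρ • y by module,
    mul_comm 2 (1 - _), ← div_div]
  congr 1
  linear_combination ‖ρ • (u + y) + y‖ ^ 2 / 2 * hcurv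

lemma integral_exp_quadraticWeight_sub_le (hE : 2 ≤ finrank ℝ E) {ρ s : ℝ}
    (hs : ρ ^ 2 + s ^ 2 = 1) (y u : E) :
    ∫ v, exp (quadraticWeight y ρ (ρ • u + s • v) - quadraticWeight y ρ u) ∂γ E
      ≤ weightProfile (finrank ℝ E) (exp (-‖y‖ ^ 2) * ‖u + y‖ ^ 2) ρ := by
  rw [integral_exp_quadraticWeight_sub hs, sq_norm_smul_add]
  exact exp_le_weightProfile (by exact_mod_cast hE) (by linarith [sq_nonneg s]) (sq_nonneg _)
    (sq_nonneg _) (sq_norm_add_smul_le _ _ _) (sq_nonneg _)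

lemma gaussianCorrelation_le_integral_sq_norm_mul_weightProfile {F : Type*}
    [NormedAddCommGroup F] [InnerProductSpace ℝ F] (hE : 2 ≤ finrank ℝ E) {G : E → F}
    (hG : Continuous G) {B : ℝ} (hB : ∀ x, ‖G x‖ ≤ B) (y : E) (θ : ℝ) :
    gaussianCorrelation G θ ≤ ∫ u, ‖G u‖ ^ 2
      * weightProfile (finrank ℝ E) (exp (-‖y‖ ^ 2) * ‖u + y‖ ^ 2) (cos θ) ∂γ E := by
  have hprofile := continuous_weightProfile_cos (d := finrank ℝ E) (Nat.cast_nonneg _)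
  have hs := cos_sq_add_sin_sq θ
  refine gaussianCorrelation_le_integral_sq_norm_mul hG hB
    (continuous_quadraticWeight y (cos θ)) (integrable_exp_quadraticWeight_sub hs y)
    (integral_exp_quadraticWeight_sub_le hE hs y) ?_
  exact integrable_sq_norm_mul hG hB
    (hprofile.comp (f := fun u : E ↦ (exp (-‖y‖ ^ 2) * ‖u + y‖ ^ 2, θ)) (by fun_prop))
    fun u ↦ norm_weightProfile_le (Nat.cast_nonneg _) (by positivity) (cos_sq_le_one θ)

lemma integral_sin_mul_gaussianCorrelation_le {F : Type*} [NormedAddCommGroup F]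
    [InnerProductSpace ℝ F] {G : E → F} (hG : Continuous G) {B : ℝ} (hB : ∀ x, ‖G x‖ ≤ B)
    {Φ : ℝ → E → ℝ} (hΦ : Continuous (Function.uncurry Φ)) {C : ℝ} (hC : ∀ θ u, ‖Φ θ u‖ ≤ C)
    (hle : ∀ θ, gaussianCorrelation G θ ≤ ∫ u, ‖G u‖ ^ 2 * Φ θ u ∂γ E) :
    ∫ θ in 0..π / 2, sin θ * gaussianCorrelation G θ
      ≤ ∫ u, ‖G u‖ ^ 2 * (∫ θ in 0..π / 2, sin θ * Φ θ u) ∂γ E := by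
  have hcorr := continuous_gaussianCorrelation hG hB
  set Q : ℝ → E → ℝ := fun θ u ↦ sin θ * (‖G u‖ ^ 2 * Φ θ u)
  have hQ : Continuous (Function.uncurry Q) := by fun_prop
  have hQC : ∀ θ u, ‖Q θ u‖ ≤ B ^ 2 * C := fun θ u ↦
    (mul_le_of_le_one_left (norm_nonneg _) (abs_sin_le_one θ)).trans'
      (norm_mul _ _).le |>.trans (norm_sq_norm_mul_le (hB u) (hC θ u))
  calc _ ≤ ∫ θ in 0..π / 2, ∫ u, Q θ u ∂γ E := by
        refine intervalIntegral.integral_mono_on (by positivity)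
          (Continuous.intervalIntegrable (by fun_prop) _ _)
          (Continuous.intervalIntegrable (continuous_of_dominated (bound := fun _ ↦ B ^ 2 * C)
            (fun θ ↦ (hQ.uncurry_left θ).aestronglyMeasurable) (fun θ ↦ .of_forall (hQC θ))
            (integrable_const _) (.of_forall fun u ↦ hQ.uncurry_right u)) _ _) fun θ hθ ↦ ?_
        rw [integral_const_mul]
        exact mul_le_mul_of_nonneg_left (hle θ)
          (sin_nonneg_of_nonneg_of_le_pi hθ.1 (by linarith [hθ.2, pi_pos]))
    _ = ∫ u, (∫ θ in 0..π / 2, Q θ u) ∂γ E := by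
        have : IsFiniteMeasure (volume.restrict (uIoc 0 (π / 2))) := by
          rw [uIoc_of_le (by positivity)]; infer_instance
        exact intervalIntegral_integral_swap
          (.of_bound hQ.aestronglyMeasurable (B ^ 2 * C) (.of_forall fun p ↦ hQC _ _))
    _ = _ := by
        simp only [Q, mul_left_comm (sin _), intervalIntegral.integral_const_mul]

theorem variance_stdGaussian_le (hE : 2 ≤ finrank ℝ E) (hf : ContDiff ℝ 1 f)
    (hA : ∀ x, ‖f x‖ ≤ A) (hB : ∀ x, ‖∇ f x‖ ≤ B) (y : E) :
    Var[f; γ E] ≤ (finrank ℝ E : ℝ) * (finrank ℝ E + 3) / (finrank ℝ E - 1)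
      * ∫ u, ‖∇ f u‖ ^ 2 / (1 + exp (-‖y‖ ^ 2) * ‖u + y‖ ^ 2) ∂γ E := by
  have hd : (2 : ℝ) ≤ finrank ℝ E := by exact_mod_cast hE
  have hf'c := continuous_gradient hf
  have hprofile := continuous_weightProfile_cos (d := finrank ℝ E) (by linarith)
  set a : E → ℝ := fun u ↦ exp (-‖y‖ ^ 2) * ‖u + y‖ ^ 2
  have ha : Continuous a := by fun_prop
  have ha0 : ∀ u, 0 ≤ a u := fun u ↦ by positivity
  calc Var[f; γ E] = ∫ θ in 0..π / 2, sin θ * gaussianCorrelation (∇ f) θ :=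
        variance_stdGaussian_eq_integral_gaussianCorrelation hf hA hB
    _ ≤ ∫ u, ‖∇ f u‖ ^ 2
          * (∫ θ in 0..π / 2, sin θ * weightProfile (finrank ℝ E) (a u) (cos θ)) ∂γ E :=
        integral_sin_mul_gaussianCorrelation_le hf'c hB
          (hprofile.comp (f := fun p : ℝ × E ↦ (a p.2, p.1)) (by fun_prop))
          (fun θ u ↦ norm_weightProfile_le (by linarith) (ha0 u) (cos_sq_le_one θ))
          (gaussianCorrelation_le_integral_sq_norm_mul_weightProfile hE hf'c hB y)
    _ ≤ ∫ u, finrank ℝ E * (finrank ℝ E + 3) / (finrank ℝ E - 1)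
          * (‖∇ f u‖ ^ 2 / (1 + a u)) ∂γ E := by
        refine integral_mono_of_nonneg (.of_forall fun u ↦ mul_nonneg (by positivity)
          (integral_sin_mul_weightProfile_cos_nonneg _ _))
          ((integrable_sq_norm_div_one_add hf'c hB ha ha0).const_mul _) (.of_forall fun u ↦ ?_)
        exact (mul_le_mul_of_nonneg_left (integral_sin_mul_weightProfile_cos_le hd (ha0 u))
          (by positivity)).trans_eq (by ring)
    _ = _ := integral_const_mul _ _

lemma integral_stdGaussian_eq_integral_translate (g : E → ℝ) (y : E) :
    ∫ x, g x ∂γ E = ∫ x, g (x + y) * exp (-inner ℝ y x - ‖y‖ ^ 2 / 2) ∂γ E := by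
  rw [integral_stdGaussian, integral_stdGaussian, ← integral_add_right_eq_self _ y]
  refine integral_congr_ae (.of_forall fun x ↦ ?_)
  simp only [gaussianDensity_add]
  ring

lemma integrable_exp_mul_neg_inner_sub_stdGaussian (y : E) (k : ℝ) :
    Integrable (fun x ↦ exp (k * (-inner ℝ y x - ‖y‖ ^ 2 / 2))) (γ E) := by
  simp_rw [exp_mul_neg_inner_sub]
  exact (integrable_exp_sq_norm_add_inner_stdGaussian one_pos _).const_mul _

lemma integral_exp_mul_neg_inner_sub_stdGaussian (y : E) (k : ℝ) :
    ∫ x, exp (k * (-inner ℝ y x - ‖y‖ ^ 2 / 2)) ∂γ E = exp ((k ^ 2 - k) / 2 * ‖y‖ ^ 2) := by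
  simp_rw [exp_mul_neg_inner_sub]
  rw [integral_const_mul, integral_exp_sq_norm_add_inner_stdGaussian one_pos, sub_zero, one_rpow,
    one_mul, ← exp_add, norm_smul, mul_pow, norm_eq_abs, sq_abs]
  ring_nf

lemma integral_exp_neg_inner_sub_stdGaussian (y : E) :
    ∫ x, exp (-inner ℝ y x - ‖y‖ ^ 2 / 2) ∂γ E = 1 := by
  simpa using integral_exp_mul_neg_inner_sub_stdGaussian y 1

lemma memLp_two_exp_neg_inner_sub_stdGaussian (y : E) :
    MemLp (fun x ↦ exp (-inner ℝ y x - ‖y‖ ^ 2 / 2)) 2 (γ E) := by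
  refine (memLp_two_iff_integrable_sq (Continuous.aestronglyMeasurable (by fun_prop))).2 ?_
  simpa only [← exp_nat_mul] using integrable_exp_mul_neg_inner_sub_stdGaussian y (2 : ℕ)

/- The Cameron-Martin density of `γ` translated by `-y` has `χ²`-divergence `e^{‖y‖²} - 1`. -/
lemma variance_exp_neg_inner_sub_stdGaussian (y : E) :
    Var[fun x ↦ exp (-inner ℝ y x - ‖y‖ ^ 2 / 2); γ E] = exp (‖y‖ ^ 2) - 1 := by
  rw [ProbabilityTheory.variance_eq_sub (memLp_two_exp_neg_inner_sub_stdGaussian y),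
    integral_exp_neg_inner_sub_stdGaussian, one_pow]
  simp only [Pi.pow_apply, ← exp_nat_mul]
  rw [integral_exp_mul_neg_inner_sub_stdGaussian]
  norm_num

lemma covariance_exp_neg_inner_sub_stdGaussian {g : E → ℝ} (y : E)
    (hg : MemLp (fun x ↦ g (x + y)) 2 (γ E)) :
    cov[fun x ↦ g (x + y), fun x ↦ exp (-inner ℝ y x - ‖y‖ ^ 2 / 2); γ E]
      = ∫ x, g x ∂γ E - ∫ x, g (x + y) ∂γ E := by
  rw [ProbabilityTheory.covariance_eq_sub hg (memLp_two_exp_neg_inner_sub_stdGaussian y),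
    integral_exp_neg_inner_sub_stdGaussian, mul_one, integral_stdGaussian_eq_integral_translate g y]
  rfl

lemma integral_sq_translate_sub_integral_le {g : E → ℝ} (y : E)
    (hg : MemLp (fun x ↦ g (x + y)) 2 (γ E)) :
    ∫ x, (g (x + y) - ∫ z, g z ∂γ E) ^ 2 ∂γ E
      ≤ exp (‖y‖ ^ 2) * Var[fun x ↦ g (x + y); γ E] := by
  have hcov := sq_covariance_le_variance_mul_variance hg (memLp_two_exp_neg_inner_sub_stdGaussian y)
  rw [covariance_exp_neg_inner_sub_stdGaussian y hg,
    variance_exp_neg_inner_sub_stdGaussian] at hcov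
  rw [integral_sq_sub_const hg]
  linarith

lemma integral_sq_translate_sub_integral_le_integral_gradient (hE : 2 ≤ finrank ℝ E)
    (hf : ContDiff ℝ 1 f) (hA : ∀ x, ‖f x‖ ≤ A) (hB : ∀ x, ‖∇ f x‖ ≤ B) {R : ℝ} {y : E}
    (hy : ‖y‖ ≤ R) :
    ∫ x, (f (x + y) - ∫ z, f z ∂γ E) ^ 2 ∂γ E
      ≤ (finrank ℝ E : ℝ) * (finrank ℝ E + 3) / (finrank ℝ E - 1) * exp (R ^ 2)
        * ∫ x, ‖∇ f (x + y)‖ ^ 2 / (1 + exp (-R ^ 2) * ‖x + y‖ ^ 2) ∂γ E := by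
  have hd : (2 : ℝ) ≤ finrank ℝ E := by exact_mod_cast hE
  set K : ℝ := finrank ℝ E * (finrank ℝ E + 3) / (finrank ℝ E - 1)
  have hK : 0 ≤ K := div_nonneg (by positivity) (by linarith)
  have hf'c := continuous_gradient hf
  have h_int : ∀ r : ℝ, Integrable
      (fun x ↦ ‖∇ f (x + y)‖ ^ 2 / (1 + exp (-r ^ 2) * ‖x + y‖ ^ 2)) (γ E) := fun r ↦
    integrable_sq_norm_div_one_add (hf'c.comp (continuous_add_const y)) (fun x ↦ hB _)
      (by fun_prop) fun x ↦ by positivity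
  have hpoincare := variance_stdGaussian_le (f := fun x ↦ f (x + y)) hE (hf.comp (by fun_prop))
    (fun x ↦ hA _) (fun x ↦ (congrArg norm (gradient_comp_add_right f x y)).trans_le (hB _)) y
  simp only [gradient_comp_add_right] at hpoincare
  calc _ ≤ exp (‖y‖ ^ 2) * Var[fun x ↦ f (x + y); γ E] :=
        integral_sq_translate_sub_integral_le y (.of_bound
          (Continuous.aestronglyMeasurable (hf.continuous.comp (by fun_prop))) A
          (.of_forall fun x ↦ hA _))
    _ ≤ exp (‖y‖ ^ 2) * _ := mul_le_mul_of_nonneg_left hpoincare (exp_nonneg _)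
    _ = K * ∫ x, exp (‖y‖ ^ 2)
          * (‖∇ f (x + y)‖ ^ 2 / (1 + exp (-‖y‖ ^ 2) * ‖x + y‖ ^ 2)) ∂γ E := by
        rw [integral_const_mul]; ring
    _ ≤ K * ∫ x, exp (R ^ 2)
          * (‖∇ f (x + y)‖ ^ 2 / (1 + exp (-R ^ 2) * ‖x + y‖ ^ 2)) ∂γ E := by
        refine mul_le_mul_of_nonneg_left (integral_mono ((h_int _).const_mul _)
          ((h_int R).const_mul _) fun x ↦ ?_) hK
        gcongr
    _ = _ := by rw [integral_const_mul]; ring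

theorem weighted_poincare_mixture_general (hE : 2 ≤ finrank ℝ E) {R : ℝ} {ν : Measure E}
    [IsProbabilityMeasure ν] (hν : ∀ᵐ y ∂ν, ‖y‖ ≤ R) (hf : ContDiff ℝ 1 f)
    (hA : ∀ x, ‖f x‖ ≤ A) (hB : ∀ x, ‖∇ f x‖ ≤ B) :
    Var[f; γ E ∗ ν] ≤ (finrank ℝ E : ℝ) * (finrank ℝ E + 3) / (finrank ℝ E - 1) * exp (R ^ 2)
      * ∫ x, ‖∇ f x‖ ^ 2 / (1 + exp (-R ^ 2) * ‖x‖ ^ 2) ∂(γ E ∗ ν) := by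
  set c := ∫ z, f z ∂γ E
  have hfc := hf.continuous
  have hL2 : MemLp f 2 (ν ∗ γ E) := .of_bound hfc.aestronglyMeasurable A (.of_forall hA)
  have hsq : Integrable (fun x ↦ (f x - c) ^ 2) (ν ∗ γ E) := (hL2.sub (memLp_const c)).integrable_sq
  have hgrad : Integrable (fun x ↦ ‖∇ f x‖ ^ 2 / (1 + exp (-R ^ 2) * ‖x‖ ^ 2)) (ν ∗ γ E) :=
    integrable_sq_norm_div_one_add (continuous_gradient hf) hB (by fun_prop) fun x ↦ by positivity
  rw [Measure.conv_comm]
  calc Var[f; ν ∗ γ E] ≤ ∫ x, (f x - c) ^ 2 ∂(ν ∗ γ E) := by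
        rw [integral_sq_sub_const hL2]
        exact le_add_of_nonneg_right (sq_nonneg _)
    _ = ∫ y, ∫ x, (f (y + x) - c) ^ 2 ∂γ E ∂ν := integral_conv hsq
    _ ≤ ∫ y, (finrank ℝ E : ℝ) * (finrank ℝ E + 3) / (finrank ℝ E - 1) * exp (R ^ 2)
          * ∫ x, ‖∇ f (y + x)‖ ^ 2 / (1 + exp (-R ^ 2) * ‖y + x‖ ^ 2) ∂γ E ∂ν := by
        refine integral_mono_ae (integrable_integral_of_integrable_conv hsq)
          ((integrable_integral_of_integrable_conv hgrad).const_mul _) ?_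
        filter_upwards [hν] with y hy
        simp only [add_comm y]
        exact integral_sq_translate_sub_integral_le_integral_gradient hE hf hA hB hy
    _ = _ := by rw [integral_const_mul, integral_conv hgrad]

lemma stdGaussian_eq_stdGaussian_euclideanSpace (d : ℕ) : stdGaussian d = γ (Ed d) := by
  rw [stdGaussian_eq_withDensity, stdGaussian]
  simp only [gaussianDensity, finrank_euclideanSpace_fin]

lemma varOf_eq_variance {d : ℕ} {μ : Measure (Ed d)} [IsProbabilityMeasure μ] {g : Ed d → ℝ}
    (hg : MemLp g 2 μ) : varOf μ g = Var[g; μ] :=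
  (ProbabilityTheory.variance_eq_sub hg).symm

lemma msupport_eq_support {d : ℕ} (μ : Measure (Ed d)) : msupport μ = μ.support := by
  simp only [msupport, Measure.support_eq_forall_isOpen, pos_iff_ne_zero]
  grind

end StdGaussian

/-- Dimensional weighted Poincaré inequality for symmetric Gaussian
mixtures `μ = γ_d ⋆ ν` with `ν` symmetric and supported in a ball of radius `R`. -/
theorem weighted_poincare_mixture
    (d : ℕ) (hd : 2 ≤ d) (R : ℝ) (ν : Measure (Ed d)) [IsProbabilityMeasure ν]
    (hν : msupport ν ⊆ Metric.closedBall 0 R)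
    (hsym : Measure.map (fun x : Ed d => -x) ν = ν)
    (μ : Measure (Ed d)) (hμ : μ = mconv (stdGaussian d) ν)
    (g : Ed d → ℝ) (hg : ContDiff ℝ (⊤ : ℕ∞) g) (hgc : HasCompactSupport g) :
    varOf μ g ≤ (d : ℝ) * (d + 3) / (d - 1) * Real.exp (R ^ 2) *
      ∫ x, ‖gradient g x‖ ^ 2 / (1 + Real.exp (-R ^ 2) * ‖x‖ ^ 2) ∂μ := by
  have hg1 : ContDiff ℝ 1 g := hg.of_le (by exact_mod_cast le_top)
  have hνR : ∀ᵐ y ∂ν, ‖y‖ ≤ R := by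
    rw [msupport_eq_support] at hν
    filter_upwards [Measure.support_mem_ae] with y hy using mem_closedBall_zero_iff.1 (hν hy)
  obtain ⟨A, hA⟩ := hgc.exists_bound_of_continuous hg1.continuous
  obtain ⟨B, hB⟩ := (hasCompactSupport_gradient hgc).exists_bound_of_continuous
    (continuous_gradient hg1)
  rw [stdGaussian_eq_stdGaussian_euclideanSpace] at hμ
  obtain rfl : μ = (ProbabilityTheory.stdGaussian (Ed d)).conv ν := hμ
  rw [varOf_eq_variance (.of_bound hg1.continuous.aestronglyMeasurable A (.of_forall hA))]
  simpa only [finrank_euclideanSpace_fin] using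
    weighted_poincare_mixture_general (by rwa [finrank_euclideanSpace_fin]) hνR hg1 hA hB
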